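/- Let 1 < q ≤ ∞ and 2 ≤ p ≤ ∞. Then there exist a sequence (φ_j) of Schwartz functions on ℝ³ and a Schwartz function ψ on ℝ³ such that ‖φ_j‖_{l^q l^p L²} → 0 as j → ∞ while ∫_{ℝ³} φ_j ψ dx dy → ∞; in particular (φ_j) converges to 0 in l^q l^p L² but does not converge in the sense of tempered distributions. -/

import Mathlib

noncomputable section

open MeasureTheory
open scoped ENNReal

abbrev R3 := ℝ × ℝ × ℝ

/-- (Nonunitary) Fourier transform on ℝ³ = ℝ_x × ℝ²_y. -/
def ft3 (f : R3 → ℂ) (ζ : R3) : ℂ :=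
  ∫ z : R3, Complex.exp (-Complex.I *
    ((z.1 * ζ.1 + z.2.1 * ζ.2.1 + z.2.2 * ζ.2.2 : ℝ) : ℂ)) * f z

/-- The region Γ_{λ,k} = {(ξ,η) : λ ≤ |ξ| < 2λ, |η/ξ − k|_∞ ≤ λ/2}. -/
def Gam (l : ℝ) (k : ℝ × ℝ) : Set R3 :=
  {ζ : R3 | l ≤ |ζ.1| ∧ |ζ.1| < 2 * l ∧
    max |ζ.2.1 / ζ.1 - k.1| |ζ.2.2 / ζ.1 - k.2| ≤ l / 2}

/-- Fourier projection f_{Γ_{λ,k}}: inverse Fourier transform of the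
characteristic function of Γ_{λ,k} times f̂. -/
def projG (l : ℝ) (k : ℝ × ℝ) (φ : SchwartzMap R3 ℂ) (z : R3) : ℂ :=
  ∫ ζ in Gam l k, Complex.exp (Complex.I *
    ((z.1 * ζ.1 + z.2.1 * ζ.2.1 + z.2.2 * ζ.2.2 : ℝ) : ℂ)) * ft3 (fun w => φ w) ζ

/-- ℓ^p sum in ℝ≥0∞, with the usual modification for p = ∞. -/
def lpS (p : ℝ≥0∞) {ι : Type*} (f : ι → ℝ≥0∞) : ℝ≥0∞ :=
  if p = ∞ then ⨆ i, f i else (∑' i, f i ^ p.toReal) ^ (1 / p.toReal)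

/-- The norm ‖φ‖_{l^q l^p L²} = (∑_{λ∈2^ℤ} λ^{q/2} (∑_{k∈λℤ²} ‖φ_{Γ_{λ,k}}‖_{L²}^p)^{q/p})^{1/q}. -/
def lqlpNorm (q p : ℝ≥0∞) (φ : SchwartzMap R3 ℂ) : ℝ≥0∞ :=
  lpS q fun n : ℤ => ((2 : ℝ≥0∞) ^ n) ^ ((1 : ℝ) / 2) *
    lpS p fun m : ℤ × ℤ =>
      eLpNorm (projG ((2 : ℝ) ^ n) ((2 : ℝ) ^ n * (m.1 : ℝ), (2 : ℝ) ^ n * (m.2 : ℝ)) φ) 2 volume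

open Filter

open scoped FourierTransform SchwartzMap

lemma plancherel_L1L2 {E : Type*} [NormedAddCommGroup E] [InnerProductSpace ℝ E]
    [FiniteDimensional ℝ E] [MeasurableSpace E] [BorelSpace E] (g : E → ℂ)
    (h1 : Integrable g volume) (h2 : MemLp g 2 volume) :
    eLpNorm (𝓕 g) 2 volume = eLpNorm g 2 volume := by
  set G : Lp (α := E) ℂ 2 volume := h2.toLp g with hG
  have hcont : Continuous (𝓕 g) :=
    VectorFourier.fourierIntegral_continuous Real.continuous_fourierChar
      (by exact continuous_inner) h1
  have hae : ∀ᵐ x ∂(volume : Measure E), (𝓕 G : Lp (α := E) ℂ 2 volume) x = 𝓕 g x := by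
    apply ae_eq_of_integral_contDiff_smul_eq
    · exact (Lp.memLp _).locallyIntegrable (by norm_num)
    · exact hcont.locallyIntegrable
    intro s hs1 hs2
    have hc : HasCompactSupport (fun x => (s x : ℂ)) := by
      refine hs2.comp_left (g := fun r : ℝ => (r : ℂ)) (by simp)
    let S : 𝓢(E, ℂ) := hc.toSchwartzMap (Complex.ofRealCLM.contDiff.comp hs1)
    have e1 := congrArg (fun T => T S) (Lp.fourier_toTemperedDistribution_eq G)
    simp only [TemperedDistribution.fourier_apply, Lp.toTemperedDistribution_apply] at e1
    have e2 : ∫ x, (𝓕 S) x • g x = ∫ x, S x • 𝓕 g x := by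
      have := VectorFourier.integral_fourierIntegral_smul_eq_flip (μ := (volume : Measure E))
        (ν := (volume : Measure E)) (L := innerₗ E) (f := S) (g := g)
        Real.continuous_fourierChar (by exact continuous_inner) S.integrable h1
      rw [flip_innerₗ] at this
      exact this
    have e3 : ∫ x, (𝓕 S) x • G x = ∫ x, (𝓕 S) x • g x := by
      apply integral_congr_ae
      filter_upwards [h2.coeFn_toLp] with x hx
      rw [hG, hx]
    have e4 : ∫ x, S x • (𝓕 G : Lp (α := E) ℂ 2 volume) x = ∫ x, S x • 𝓕 g x := by
      rw [← e1, e3, e2]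
    exact e4
  rw [← eLpNorm_congr_ae hae, ← eLpNorm_congr_ae h2.coeFn_toLp]
  have := Lp.norm_fourier_eq G
  rw [Lp.norm_def, Lp.norm_def] at this
  exact (ENNReal.toReal_eq_toReal_iff' (Lp.eLpNorm_ne_top _) (Lp.eLpNorm_ne_top _)).1 this

abbrev EE := WithLp 2 (ℝ × WithLp 2 (ℝ × ℝ))

def eR (v : EE) : R3 := (v.fst, v.snd.fst, v.snd.snd)

def eM : EE ≃ᵐ R3 := (MeasurableEquiv.toLp 2 (ℝ × WithLp 2 (ℝ × ℝ))).symm.trans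
  ((MeasurableEquiv.refl ℝ).prodCongr (MeasurableEquiv.toLp 2 (ℝ × ℝ)).symm)

lemma eM_apply (v : EE) : eM v = eR v := rfl

lemma eM_mp : MeasurePreserving eM volume volume := by
  unfold eM
  refine MeasurePreserving.trans (WithLp.volume_preserving_ofLp _ _) ?_
  exact (MeasurePreserving.id volume).prod (WithLp.volume_preserving_ofLp _ _)

lemma plancherel_R3' : ∃ K : ℝ≥0∞, K ≠ ∞ ∧ ∀ (g : R3 → ℂ) (_ : Integrable g) (_ : MemLp g 2 volume),
    eLpNorm (fun z : R3 => ∫ ζ, Complex.exp (Complex.I *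
    ((z.1 * ζ.1 + z.2.1 * ζ.2.1 + z.2.2 * ζ.2.2 : ℝ) : ℂ)) * g ζ) 2 volume
      ≤ K * eLpNorm g 2 volume := by
  let r : ℝ := -(2 * Real.pi)⁻¹
  have hr : r ≠ 0 := by simp [r, Real.pi_ne_zero]
  have key : ∀ (g : R3 → ℂ) (z : R3), ∫ ζ, Complex.exp (Complex.I *
    ((z.1 * ζ.1 + z.2.1 * ζ.2.1 + z.2.2 * ζ.2.2 : ℝ) : ℂ)) * g ζ = 𝓕 (g ∘ eM) (r • eM.symm z) := by
    intro g z
    rw [Real.fourier_eq', ← eM_mp.integral_comp eM.measurableEmbedding]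
    congr 1 with v
    obtain ⟨w, rfl⟩ := eM.surjective z
    simp only [MeasurableEquiv.symm_apply_apply, Function.comp, smul_eq_mul]
    congr 2
    rw [inner_smul_right]
    simp only [eM_apply, eR, r, WithLp.prod_inner_apply]
    have : (Real.pi : ℂ) ≠ 0 := by exact_mod_cast Real.pi_ne_zero
    simp
    field_simp
    ring
  have hsm : Measure.map (fun w : EE => r • w) volume
      = ENNReal.ofReal |(r ^ Module.finrank ℝ EE)⁻¹| • (volume : Measure EE) :=
    Measure.map_addHaar_smul _ hr
  refine ⟨ENNReal.ofReal |(r ^ Module.finrank ℝ EE)⁻¹| ^ (1 / (2 : ℝ≥0∞).toReal), by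
    apply ENNReal.rpow_ne_top_of_nonneg <;> simp, ?_⟩
  intro g h1 h2
  simp_rw [key]
  have i1 : Integrable (g ∘ eM) := (eM_mp.integrable_comp_emb eM.measurableEmbedding).2 h1
  have i2 : MemLp (g ∘ eM) 2 volume := h2.comp_measurePreserving eM_mp
  have hcont : Continuous (𝓕 (g ∘ eM)) :=
    VectorFourier.fourierIntegral_continuous Real.continuous_fourierChar
      (by exact continuous_inner) i1
  have a1 : eLpNorm (fun z => 𝓕 (g ∘ eM) (r • eM.symm z)) 2 volume
      = eLpNorm (fun w : EE => 𝓕 (g ∘ eM) (r • w)) 2 volume := by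
    have := eLpNorm_comp_measurePreserving (p := 2) (g := fun w : EE => 𝓕 (g ∘ eM) (r • w))
      (μ := (volume : Measure R3)) (f := eM.symm)
      (Continuous.aestronglyMeasurable (by fun_prop)) (eM_mp.symm eM)
    exact this
  have a2 : eLpNorm (fun w : EE => 𝓕 (g ∘ eM) (r • w)) 2 volume
      = eLpNorm (𝓕 (g ∘ eM)) 2 (Measure.map (fun w : EE => r • w) volume) := by
    rw [eLpNorm_map_measure hcont.aestronglyMeasurable (by fun_prop)]
    rfl
  rw [a1, a2, hsm, eLpNorm_smul_measure_of_ne_top (by simp), plancherel_L1L2 _ i1 i2,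
    eLpNorm_comp_measurePreserving h2.1 eM_mp]
  simp

instance vol_haar : (volume : Measure R3).IsAddHaarMeasure := by
  have h2 : (volume : Measure (ℝ × ℝ)).IsAddHaarMeasure := by
    rw [Measure.volume_eq_prod]; infer_instance
  rw [Measure.volume_eq_prod]; infer_instance

lemma meas_shell (l : ℝ) : MeasurableSet {ζ : R3 | l ≤ |ζ.1| ∧ |ζ.1| < 2 * l} := by
  have h : Measurable fun ζ : R3 => |ζ.1| := by fun_prop
  exact (measurableSet_le measurable_const h).inter (measurableSet_lt h measurable_const)

lemma ft3_bdd (φ : SchwartzMap R3 ℂ) (ζ : R3) : ‖ft3 (fun w => φ w) ζ‖ ≤ ∫ z, ‖φ z‖ := by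
  unfold ft3
  refine (norm_integral_le_integral_norm _).trans (le_of_eq ?_)
  congr 1 with z
  rw [norm_mul, neg_mul, mul_comm Complex.I, ← neg_mul, ← Complex.ofReal_neg,
    Complex.norm_exp_ofReal_mul_I, one_mul]

lemma ft3_cont (φ : SchwartzMap R3 ℂ) : Continuous (ft3 (fun w => φ w)) := by
  unfold ft3
  refine continuous_of_dominated (bound := fun z => ‖φ z‖) ?_ ?_ ?_ ?_
  · intro ζ
    have := φ.continuous
    exact Continuous.aestronglyMeasurable (by fun_prop)
  · intro ζ
    refine Eventually.of_forall fun z => le_of_eq ?_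
    rw [norm_mul, neg_mul, mul_comm Complex.I, ← neg_mul, ← Complex.ofReal_neg,
      Complex.norm_exp_ofReal_mul_I, one_mul]
  · exact φ.integrable.norm
  · refine Eventually.of_forall fun z => ?_
    fun_prop

lemma meas_Gam (l : ℝ) (k : ℝ × ℝ) : MeasurableSet (Gam l k) := by
  unfold Gam
  have h : Measurable fun ζ : R3 => |ζ.1| := by fun_prop
  have h' : Measurable fun ζ : R3 => max |ζ.2.1 / ζ.1 - k.1| |ζ.2.2 / ζ.1 - k.2| := by fun_prop
  exact (measurableSet_le measurable_const h).inter ((measurableSet_lt h measurable_const).inter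
    (measurableSet_le h' measurable_const))

lemma aux_div (a b k l : ℝ) (hl : 0 < l) (h1 : l ≤ |b|) (h2 : |b| < 2 * l) (h : |a / b - k| ≤ l / 2) :
    |a| ≤ (|k| + l / 2) * (2 * l) := by
  have hb : b ≠ 0 := by
    rintro rfl
    simp at h1
    linarith
  have h3 : |a / b| ≤ |k| + l / 2 := by
    have := abs_sub_abs_le_abs_sub (a / b) k
    linarith
  have h4 : |a| = |a / b| * |b| := by
    rw [← abs_mul, div_mul_cancel₀ _ hb]
  rw [h4]
  have := abs_nonneg k
  have := abs_nonneg b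
  gcongr

lemma vol_Gam (l : ℝ) (hl : 0 < l) (k : ℝ × ℝ) : volume (Gam l k) < ∞ := by
  have hsub : Gam l k ⊆ Set.Icc (-(2*l)) (2*l) ×ˢ
      (Set.Icc (-((|k.1| + l / 2) * (2 * l))) ((|k.1| + l / 2) * (2 * l)) ×ˢ
       Set.Icc (-((|k.2| + l / 2) * (2 * l))) ((|k.2| + l / 2) * (2 * l))) := by
    rintro ⟨x, y, z⟩ ⟨h1, h2, h3⟩
    simp only at h1 h2 h3
    rw [max_le_iff] at h3
    exact ⟨abs_le.1 h2.le, abs_le.1 (aux_div _ _ _ _ hl h1 h2 h3.1),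
      abs_le.1 (aux_div _ _ _ _ hl h1 h2 h3.2)⟩
  exact (measure_mono hsub).trans_lt
    (isCompact_Icc.prod (isCompact_Icc.prod isCompact_Icc)).measure_lt_top

lemma proj_bound : ∃ K : ℝ≥0∞, K ≠ ∞ ∧ ∀ (l : ℝ) (_ : 0 < l) (k : ℝ × ℝ) (φ : SchwartzMap R3 ℂ),
    eLpNorm (projG l k φ) 2 volume ^ (2 : ℝ) ≤
      K * ∫⁻ ζ in Gam l k, ‖ft3 (fun w => φ w) ζ‖ₑ ^ (2 : ℝ) := by
  obtain ⟨K, hK, h⟩ := plancherel_R3'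
  refine ⟨K ^ (2 : ℝ), by finiteness, ?_⟩
  intro l hl k φ
  have hm := meas_Gam l k
  have hfin : IsFiniteMeasure (volume.restrict (Gam l k)) := ⟨by simpa using vol_Gam l hl k⟩
  have hLp : ∀ p : ℝ≥0∞, MemLp (ft3 (fun w => φ w)) p (volume.restrict (Gam l k)) := fun p =>
    MemLp.of_bound (ft3_cont φ).aestronglyMeasurable _ (Eventually.of_forall (ft3_bdd φ))
  have h2 := h ((Gam l k).indicator (ft3 (fun w => φ w)))
    ((integrable_indicator_iff hm).2 (memLp_one_iff_integrable.1 (hLp 1)))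
    ((memLp_indicator_iff_restrict hm).2 (hLp 2))
  rw [eLpNorm_indicator_eq_eLpNorm_restrict hm] at h2
  have h3 : projG l k φ = fun z : R3 => ∫ ζ, Complex.exp (Complex.I *
      ((z.1 * ζ.1 + z.2.1 * ζ.2.1 + z.2.2 * ζ.2.2 : ℝ) : ℂ)) *
        (Gam l k).indicator (ft3 (fun w => φ w)) ζ := by
    ext z
    unfold projG
    rw [← integral_indicator hm]
    congr 1 with ζ
    by_cases hz : ζ ∈ Gam l k <;> simp [hz]
  rw [← h3] at h2
  calc _ ≤ (K * eLpNorm (ft3 (fun w => φ w)) 2 (volume.restrict (Gam l k))) ^ (2 : ℝ) := by gcongr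
    _ = _ := by
      rw [ENNReal.mul_rpow_of_nonneg _ _ (by norm_num), eLpNorm_eq_lintegral_rpow_enorm_toReal (by norm_num) (by norm_num)]
      rw [← ENNReal.rpow_mul]
      simp

lemma lpS_le (p : ℝ≥0∞) (hp : 2 ≤ p) {ι : Type*} (f : ι → ℝ≥0∞) :
    lpS p f ≤ (∑' i, f i ^ (2 : ℝ)) ^ ((1 : ℝ) / 2) := by
  set S := ∑' i, f i ^ (2 : ℝ) with hS
  have hi : ∀ i, f i ≤ S ^ ((1 : ℝ) / 2) := by
    intro i
    have : f i = (f i ^ (2 : ℝ)) ^ ((1 : ℝ) / 2) := by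
      rw [← ENNReal.rpow_mul]; simp
    rw [this]
    gcongr
    exact ENNReal.le_tsum (f := fun i => f i ^ (2 : ℝ)) i
  unfold lpS
  split_ifs with h
  · exact iSup_le hi
  · have hp2 : 2 ≤ p.toReal := by
      have := ENNReal.toReal_mono h hp
      simpa using this
    have : ∑' i, f i ^ p.toReal ≤ S ^ (p.toReal / 2) := by
      calc ∑' i, f i ^ p.toReal ≤ ∑' i, f i ^ (2:ℝ) * (S ^ ((1 : ℝ) / 2)) ^ (p.toReal - 2) := by
            refine ENNReal.tsum_le_tsum fun i => ?_
            calc f i ^ p.toReal = f i ^ (2:ℝ) * f i ^ (p.toReal - 2) := by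
                  rw [← ENNReal.rpow_add_of_nonneg _ _ (by norm_num) (by linarith)]
                  congr 1; ring
              _ ≤ _ := by
                  have := hi i
                  have : 0 ≤ p.toReal - 2 := by linarith
                  gcongr
        _ = S ^ (1:ℝ) * S ^ (p.toReal / 2 - 1) := by
            rw [ENNReal.tsum_mul_right, ← ENNReal.rpow_mul, ENNReal.rpow_one]
            congr 2; ring
        _ = _ := by
            rw [← ENNReal.rpow_add_of_nonneg _ _ (by norm_num) (by linarith)]
            congr 1; ring
    calc _ ≤ (S ^ (p.toReal / 2)) ^ (1 / p.toReal) := by gcongr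
      _ = _ := by
        rw [← ENNReal.rpow_mul]
        congr 1
        field_simp

lemma count_int (l : ℝ) (hl : 0 < l) (a : ℝ) : ∃ s : Finset ℤ, s.card ≤ 2 ∧
    ∀ m : ℤ, |a - l * m| ≤ l / 2 → m ∈ s := by
  refine ⟨{⌊a / l + 1 / 2⌋, ⌈a / l - 1 / 2⌉}, Finset.card_le_two, ?_⟩
  intro m hm
  have hm' : |a / l - m| ≤ 1 / 2 := by
    have : a / l - m = (a - l * m) / l := by field_simp
    rw [this, abs_div, abs_of_pos hl, div_le_iff₀ hl]
    linarith
  rw [abs_le] at hm'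
  by_cases h : a / l - 1 / 2 ≤ m - 1 + 0 ∨ a / l + 1/2 < m + 1
  · have : ⌊a / l + 1 / 2⌋ = m := by
      rw [Int.floor_eq_iff]
      rcases h with h | h <;> constructor <;> linarith
    simp only [this, Finset.mem_insert, true_or]
  · push Not at h
    have : ⌈a / l - 1 / 2⌉ = m := by
      rw [Int.ceil_eq_iff]
      constructor <;> linarith
    simp only [this, Finset.mem_insert, Finset.mem_singleton, or_true]

lemma count_sum (l : ℝ) (hl : 0 < l) (F : R3 → ℝ≥0∞) (hF : Measurable F) :
    ∑' m : ℤ × ℤ, ∫⁻ ζ in Gam l (l * m.1, l * m.2), F ζ ≤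
      4 * ∫⁻ ζ in {ζ : R3 | l ≤ |ζ.1| ∧ |ζ.1| < 2 * l}, F ζ := by
  have hms : MeasurableSet {ζ : R3 | l ≤ |ζ.1| ∧ |ζ.1| < 2 * l} := meas_shell l
  simp_rw [← lintegral_indicator (meas_Gam _ _)]
  rw [← lintegral_indicator hms, ← lintegral_tsum
    (fun m => (hF.indicator (meas_Gam _ _)).aemeasurable),
    ← lintegral_const_mul _ (hF.indicator hms)]
  refine lintegral_mono fun ζ => ?_
  obtain ⟨s, hs, hs'⟩ := count_int l hl (ζ.2.1 / ζ.1)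
  obtain ⟨t, ht, ht'⟩ := count_int l hl (ζ.2.2 / ζ.1)
  rw [tsum_eq_sum (s := s ×ˢ t)]
  · calc _ ≤ ∑ m ∈ s ×ˢ t, {ζ : R3 | l ≤ |ζ.1| ∧ |ζ.1| < 2 * l}.indicator F ζ := by
          refine Finset.sum_le_sum fun m _ => ?_
          refine Set.indicator_le_indicator_of_subset ?_ (fun _ => zero_le) ζ
          intro z hz
          exact ⟨hz.1, hz.2.1⟩
      _ ≤ _ := by
          rw [Finset.sum_const, nsmul_eq_mul]
          gcongr
          rw [Finset.card_product]
          have : s.card * t.card ≤ 2 * 2 := Nat.mul_le_mul hs ht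
          exact_mod_cast this
  · intro m hm
    rw [Set.indicator_of_notMem]
    intro hz
    apply hm
    rw [Finset.mem_product]
    have := max_le_iff.1 hz.2.2
    exact ⟨hs' _ this.1, ht' _ this.2⟩

def D0 : ℝ≥0∞ := ∫⁻ x : ℝ, ENNReal.ofReal (1 + x ^ 2)⁻¹ ^ (2 : ℝ)

lemma D0_fin : D0 ≠ ∞ := by
  have h : D0 ≤ ∫⁻ x : ℝ, ENNReal.ofReal (1 + x ^ 2)⁻¹ := by
    refine lintegral_mono fun x => ?_
    have h1 : ENNReal.ofReal (1 + x ^ 2)⁻¹ ≤ 1 := by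
      rw [ENNReal.ofReal_le_one]
      exact inv_le_one_of_one_le₀ (by nlinarith [sq_nonneg x])
    calc ENNReal.ofReal (1 + x ^ 2)⁻¹ ^ (2 : ℝ) ≤ ENNReal.ofReal (1 + x ^ 2)⁻¹ ^ (1 : ℝ) :=
          ENNReal.rpow_le_rpow_of_exponent_ge h1 (by norm_num)
      _ = _ := ENNReal.rpow_one _
  exact (h.trans_lt integrable_inv_one_add_sq.lintegral_lt_top).ne

lemma scale_bound : ∃ C : ℝ≥0∞, C ≠ ∞ ∧ ∀ (p : ℝ≥0∞) (_ : 2 ≤ p) (n : ℤ) (φ : SchwartzMap R3 ℂ)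
    (A : ℝ≥0∞) (_ : ∀ ζ : R3, (2:ℝ) ^ n ≤ |ζ.1| → |ζ.1| < 2 * 2 ^ n → ‖ft3 (fun w => φ w) ζ‖ₑ ≤
      A * (ENNReal.ofReal (1 + ζ.2.1 ^ 2)⁻¹ * ENNReal.ofReal (1 + ζ.2.2 ^ 2)⁻¹)),
    ((2 : ℝ≥0∞) ^ n) ^ ((1 : ℝ) / 2) *
    (lpS p fun m : ℤ × ℤ =>
      eLpNorm (projG ((2 : ℝ) ^ n) ((2 : ℝ) ^ n * (m.1 : ℝ), (2 : ℝ) ^ n * (m.2 : ℝ)) φ) 2 volume)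
      ≤ C * (2 ^ n * A) := by
  obtain ⟨K, hK, hp⟩ := proj_bound
  refine ⟨(K * (4 * (4 * (D0 * D0)))) ^ ((1 : ℝ) / 2), ?_, ?_⟩
  · have := D0_fin
    finiteness
  intro p hp2 n φ A hA
  have hl : (0:ℝ) < 2 ^ n := by positivity
  set l : ℝ := 2 ^ n with hldef
  have hle : (2 : ℝ≥0∞) ^ n = ENNReal.ofReal l := by
    rw [hldef, ENNReal.ofReal, Real.toNNReal_zpow (by norm_num)]
    simp
  rw [hle]
  set L := ENNReal.ofReal l
  have hms : MeasurableSet {ζ : R3 | l ≤ |ζ.1| ∧ |ζ.1| < 2 * l} := meas_shell l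
  have hc := ft3_cont φ
  have h1 : ∫⁻ ζ in {ζ : R3 | l ≤ |ζ.1| ∧ |ζ.1| < 2 * l}, ‖ft3 (fun w => φ w) ζ‖ₑ ^ (2 : ℝ)
      ≤ A ^ (2:ℝ) * (4 * L * (D0 * D0)) := by
    calc _ ≤ ∫⁻ ζ in {ζ : R3 | l ≤ |ζ.1| ∧ |ζ.1| < 2 * l}, A ^ (2:ℝ) *
            (ENNReal.ofReal (1 + ζ.2.1 ^ 2)⁻¹ ^ (2:ℝ) * ENNReal.ofReal (1 + ζ.2.2 ^ 2)⁻¹ ^ (2:ℝ)) := by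
          refine setLIntegral_mono' hms fun ζ hζ => ?_
          rw [← ENNReal.mul_rpow_of_nonneg _ _ (by norm_num),
            ← ENNReal.mul_rpow_of_nonneg _ _ (by norm_num)]
          gcongr
          exact hA ζ hζ.1 hζ.2
      _ = A ^ (2:ℝ) * ∫⁻ ζ in {ζ : R3 | l ≤ |ζ.1| ∧ |ζ.1| < 2 * l},
            (ENNReal.ofReal (1 + ζ.2.1 ^ 2)⁻¹ ^ (2:ℝ) * ENNReal.ofReal (1 + ζ.2.2 ^ 2)⁻¹ ^ (2:ℝ)) := by
          rw [lintegral_const_mul]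
          fun_prop
      _ ≤ A ^ (2:ℝ) * ∫⁻ ζ : R3, (Set.Icc (-(2*l)) (2*l)).indicator (fun _ => (1:ℝ≥0∞)) ζ.1 *
            (ENNReal.ofReal (1 + ζ.2.1 ^ 2)⁻¹ ^ (2:ℝ) * ENNReal.ofReal (1 + ζ.2.2 ^ 2)⁻¹ ^ (2:ℝ)) := by
          gcongr A ^ (2:ℝ) * ?_
          rw [← lintegral_indicator hms]
          refine lintegral_mono fun ζ => ?_
          by_cases hz : ζ ∈ {ζ : R3 | l ≤ |ζ.1| ∧ |ζ.1| < 2 * l}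
          · have : ζ.1 ∈ Set.Icc (-(2*l)) (2*l) := abs_le.1 hz.2.le
            simp only [Set.indicator_of_mem hz, Set.indicator_of_mem this, one_mul, le_refl]
          · simp only [Set.indicator_of_notMem hz, zero_le]
      _ = A ^ (2:ℝ) * (4 * L * (D0 * D0)) := by
          congr 1
          rw [Measure.volume_eq_prod, lintegral_prod_mul (f := fun x : ℝ => (Set.Icc (-(2*l)) (2*l)).indicator (fun _ => (1:ℝ≥0∞)) x)
            (g := fun y : ℝ × ℝ => ENNReal.ofReal (1 + y.1 ^ 2)⁻¹ ^ (2:ℝ) * ENNReal.ofReal (1 + y.2 ^ 2)⁻¹ ^ (2:ℝ))]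
          · congr 1
            · rw [lintegral_indicator_const measurableSet_Icc, Real.volume_Icc, one_mul,
                show 2 * l - -(2 * l) = 4 * l by ring, ENNReal.ofReal_mul (by norm_num)]
              simp [L]
            · rw [Measure.volume_eq_prod, lintegral_prod_mul (f := fun x : ℝ => ENNReal.ofReal (1 + x ^ 2)⁻¹ ^ (2:ℝ))
                (g := fun x : ℝ => ENNReal.ofReal (1 + x ^ 2)⁻¹ ^ (2:ℝ))]
              · rfl
              · fun_prop
              · fun_prop
          · exact (measurable_const.indicator measurableSet_Icc).aemeasurable
          · fun_prop
  have h2 : ∑' m : ℤ × ℤ, eLpNorm (projG l (l * (m.1 : ℝ), l * (m.2 : ℝ)) φ) 2 volume ^ (2:ℝ) ≤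
      K * (4 * (4 * (D0 * D0))) * (L * A ^ (2:ℝ)) := by
    calc _ ≤ ∑' m : ℤ × ℤ, K * ∫⁻ ζ in Gam l (l * (m.1 : ℝ), l * (m.2 : ℝ)), ‖ft3 (fun w => φ w) ζ‖ₑ ^ (2 : ℝ) :=
          ENNReal.tsum_le_tsum fun m => hp l hl _ φ
      _ ≤ K * (4 * (A ^ (2:ℝ) * (4 * L * (D0 * D0)))) := by
          rw [ENNReal.tsum_mul_left]
          gcongr
          refine (count_sum l hl _ (by fun_prop)).trans ?_
          gcongr
      _ = _ := by ring
  calc _ ≤ L ^ ((1 : ℝ) / 2) * (K * (4 * (4 * (D0 * D0))) * (L * A ^ (2:ℝ))) ^ ((1 : ℝ) / 2) := by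
        gcongr
        exact (lpS_le p hp2 _).trans (by gcongr)
    _ = _ := by
        rw [ENNReal.mul_rpow_of_nonneg _ _ (by norm_num), ENNReal.mul_rpow_of_nonneg L _ (by norm_num),
          ← ENNReal.rpow_mul A]
        have : L = L ^ ((1 : ℝ) / 2) * L ^ ((1 : ℝ) / 2) := by
          rw [← ENNReal.rpow_add_of_nonneg _ _ (by norm_num) (by norm_num)]; norm_num
        conv_rhs => rw [this]
        norm_num
        ring

def bb : ContDiffBump (0 : ℝ) := ⟨1, 2, by norm_num, by norm_num⟩

lemma bb_zero {x : ℝ} (h : 2 ≤ |x|) : bb x = 0 :=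
  bb.zero_of_le_dist (by simpa [bb] using h)

lemma bb_one {x : ℝ} (h : |x| ≤ 1) : bb x = 1 :=
  bb.one_of_mem_closedBall (by simpa [bb] using h)

lemma bb_hat : ∃ C : ℝ, 0 < C ∧ ∀ t : ℝ,
    ‖∫ x : ℝ, Complex.exp (-Complex.I * ((x * t : ℝ) : ℂ)) * (bb x : ℂ)‖ ≤ C * (1 + t ^ 2)⁻¹ := by
  have hc : HasCompactSupport (fun x => (bb x : ℂ)) :=
    bb.hasCompactSupport.comp_left (g := fun r : ℝ => (r : ℂ)) (by simp)
  let B : 𝓢(ℝ, ℂ) := hc.toSchwartzMap (Complex.ofRealCLM.contDiff.comp bb.contDiff)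
  obtain ⟨C0, hC0, h0⟩ := (𝓕 B).decay 0 0
  obtain ⟨C2, hC2, h2⟩ := (𝓕 B).decay 2 0
  refine ⟨C0 + (2 * Real.pi) ^ 2 * C2, by positivity, fun t => ?_⟩
  have e : ∫ x : ℝ, Complex.exp (-Complex.I * ((x * t : ℝ) : ℂ)) * (bb x : ℂ)
      = (𝓕 B) (t / (2 * Real.pi)) := by
    rw [SchwartzMap.fourier_coe, Real.fourier_real_eq_integral_exp_smul]
    congr 1 with x
    rw [smul_eq_mul]
    congr 2
    have : (Real.pi : ℂ) ≠ 0 := by exact_mod_cast Real.pi_ne_zero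
    push_cast
    field_simp
  rw [e, le_mul_inv_iff₀ (by positivity)]
  have a0 := h0 (t / (2 * Real.pi))
  have a2 := h2 (t / (2 * Real.pi))
  simp only [norm_iteratedFDeriv_zero, pow_zero, one_mul] at a0 a2
  rw [Real.norm_eq_abs, sq_abs, div_pow, div_mul_eq_mul_div, div_le_iff₀ (by positivity)] at a2
  nlinarith

def PhiR (n : ℕ) (z : R3) : ℝ := bb ((2 ^ n : ℝ)⁻¹ * z.1) * (bb z.2.1 * bb z.2.2)

lemma PhiR_cd (n : ℕ) : ContDiff ℝ (⊤ : ℕ∞) (PhiR n) := by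
  have : ContDiff ℝ (⊤ : ℕ∞) bb := bb.contDiff
  unfold PhiR
  refine (this.comp (by fun_prop)).mul ((this.comp (by fun_prop)).mul (this.comp (by fun_prop)))

lemma PhiR_supp (n : ℕ) : HasCompactSupport (PhiR n) := by
  refine HasCompactSupport.intro (K := Set.Icc (-(2 ^ n * 2)) (2 ^ n * 2) ×ˢ
    (Set.Icc (-2) 2 ×ˢ Set.Icc (-2) 2)) (isCompact_Icc.prod (isCompact_Icc.prod isCompact_Icc)) ?_
  rintro ⟨x, y, z⟩ h
  by_contra h0
  apply h
  simp only [PhiR, mul_eq_zero, not_or] at h0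
  obtain ⟨h1, h2, h3⟩ := h0
  have h1' := not_le.1 (mt bb_zero h1)
  have h2' := not_le.1 (mt bb_zero h2)
  have h3' := not_le.1 (mt bb_zero h3)
  have hp : (0:ℝ) < 2 ^ n := by positivity
  rw [abs_mul, abs_of_pos (inv_pos.2 hp), inv_mul_lt_iff₀ hp] at h1'
  exact ⟨abs_le.1 h1'.le, abs_le.1 h2'.le, abs_le.1 h3'.le⟩

lemma Phi_supp (n : ℕ) : HasCompactSupport (fun z => (PhiR n z : ℂ)) :=
  (PhiR_supp n).comp_left (g := fun r : ℝ => (r : ℂ)) (by simp)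

def Phi (n : ℕ) : SchwartzMap R3 ℂ :=
  (Phi_supp n).toSchwartzMap (Complex.ofRealCLM.contDiff.comp (PhiR_cd n))

lemma Phi_apply (n : ℕ) (z : R3) : Phi n z = (PhiR n z : ℂ) := rfl

lemma Phi_pair (n : ℕ) : Integrable (fun z => Phi n z * Phi 0 z) volume ∧
    1 ≤ (∫ z, Phi n z * Phi 0 z).re := by
  have hc : Continuous (fun z => PhiR n z * PhiR 0 z) :=
    (PhiR_cd n).continuous.mul (PhiR_cd 0).continuous
  have hi : Integrable (fun z => PhiR n z * PhiR 0 z) volume :=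
    hc.integrable_of_hasCompactSupport (PhiR_supp n).mul_right
  have e : (fun z => Phi n z * Phi 0 z) = fun z => ((PhiR n z * PhiR 0 z : ℝ) : ℂ) := by
    ext z; simp [Phi_apply]
  rw [e]
  refine ⟨hi.ofReal, ?_⟩
  rw [integral_complex_ofReal, Complex.ofReal_re]
  have hnn : ∀ n z, 0 ≤ PhiR n z := fun n z =>
    mul_nonneg bb.nonneg (mul_nonneg bb.nonneg bb.nonneg)
  let Q : Set R3 := Set.Icc 0 1 ×ˢ (Set.Icc 0 1 ×ˢ Set.Icc 0 1)
  have hQm : MeasurableSet Q := measurableSet_Icc.prod (measurableSet_Icc.prod measurableSet_Icc)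
  have hQ : volume Q = 1 := by
    simp only [Q, Measure.volume_eq_prod, Measure.prod_prod, Real.volume_Icc]
    simp
  have h1 : ∀ n, ∀ z ∈ Q, PhiR n z = 1 := by
    rintro n ⟨x, y, z⟩ ⟨hx, hy, hz⟩
    simp only [Set.mem_Icc] at hx hy hz
    simp only [PhiR]
    rw [bb_one, bb_one, bb_one]
    · norm_num
    · exact abs_le.2 ⟨by linarith, by linarith⟩
    · exact abs_le.2 ⟨by linarith, by linarith⟩
    · have hp : (1:ℝ) ≤ 2 ^ n := one_le_pow₀ (by norm_num)
      rw [abs_of_nonneg (mul_nonneg (by positivity) hx.1), inv_mul_le_iff₀ (by linarith)]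
      linarith
  calc (1:ℝ) = ∫ z in Q, (1:ℝ) := by simp [Measure.real, hQ]
    _ = ∫ z in Q, PhiR n z * PhiR 0 z := by
      refine setIntegral_congr_fun hQm fun z hz => ?_
      simp [h1 n z hz, h1 0 z hz]
    _ ≤ _ := setIntegral_le_integral hi (Eventually.of_forall fun z => mul_nonneg (hnn _ _) (hnn _ _))

lemma Phi_ft : ∃ C : ℝ, 0 < C ∧ ∀ (n : ℕ) (ζ : R3), ‖ft3 (fun w => Phi n w) ζ‖ ≤
    C * (2 ^ n * (1 + (2 ^ n * ζ.1) ^ 2)⁻¹) * ((1 + ζ.2.1 ^ 2)⁻¹ * (1 + ζ.2.2 ^ 2)⁻¹) := by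
  obtain ⟨C, hC, h⟩ := bb_hat
  refine ⟨C * (C * C), by positivity, fun n ζ => ?_⟩
  set bh : ℝ → ℂ := fun t => ∫ x : ℝ, Complex.exp (-Complex.I * ((x * t : ℝ) : ℂ)) * (bb x : ℂ)
  have hp : (0:ℝ) < 2 ^ n := by positivity
  have e1 : ∫ x : ℝ, Complex.exp (-Complex.I * ((x * ζ.1 : ℝ) : ℂ)) * (bb ((2 ^ n : ℝ)⁻¹ * x) : ℂ)
      = (2 ^ n : ℝ) • bh (2 ^ n * ζ.1) := by
    have := Measure.integral_comp_mul_left (fun x : ℝ =>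
      Complex.exp (-Complex.I * ((x * (2 ^ n * ζ.1) : ℝ) : ℂ)) * (bb x : ℂ)) (2 ^ n : ℝ)⁻¹
    rw [inv_inv, abs_of_pos hp] at this
    rw [← this]
    congr 1 with x
    congr 4
    field_simp
  have e : ft3 (fun w => Phi n w) ζ = ((2 ^ n : ℝ) • bh (2 ^ n * ζ.1)) * (bh ζ.2.1 * bh ζ.2.2) := by
    rw [← e1]
    simp only [bh]
    rw [← integral_prod_mul, ← integral_prod_mul]
    unfold ft3
    congr 1 with z
    simp only [Phi_apply, PhiR]
    push_cast
    rw [mul_add, mul_add, Complex.exp_add, Complex.exp_add]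
    ring
  rw [e, norm_mul, norm_mul, norm_smul, Real.norm_eq_abs, abs_of_pos hp]
  calc _ ≤ 2 ^ n * (C * (1 + (2 ^ n * ζ.1) ^ 2)⁻¹) * ((C * (1 + ζ.2.1 ^ 2)⁻¹) * (C * (1 + ζ.2.2 ^ 2)⁻¹)) := by
        gcongr
        · exact h _
        · exact h _
        · exact h _
    _ = _ := by ring

def uu (k : ℤ) : ℝ := 2 ^ k * (1 + (2 ^ k) ^ 2)⁻¹

lemma uu_nonneg (k : ℤ) : 0 ≤ uu k := by unfold uu; positivity

lemma uu_fin : ∑' k : ℤ, ENNReal.ofReal (uu k) ≠ ∞ := by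
  apply Summable.tsum_ofReal_ne_top
  have hg : Summable fun n : ℕ => ((1:ℝ) / 2) ^ n := summable_geometric_two
  apply Summable.of_nat_of_neg
  · refine Summable.of_nonneg_of_le (fun n => uu_nonneg _) (fun n => ?_) hg
    unfold uu
    rw [zpow_natCast, mul_inv_le_iff₀ (by positivity), one_div, inv_pow,
      le_inv_mul_iff₀ (by positivity)]
    nlinarith
  · refine Summable.of_nonneg_of_le (fun n => uu_nonneg _) (fun n => ?_) hg
    unfold uu
    rw [zpow_neg, zpow_natCast, one_div, inv_pow 2 n]
    have h0 : (0:ℝ) ≤ (2 ^ n)⁻¹ := by positivity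
    refine mul_le_of_le_one_right h0 (inv_le_one_of_one_le₀ ?_)
    have : (0:ℝ) ≤ ((2 ^ n)⁻¹) ^ 2 := by positivity
    linarith

lemma lpS_T (q : ℝ≥0∞) (hq : 1 < q) (v : ℤ → ℝ≥0∞) (N : ℕ) (C : ℝ≥0∞) :
    lpS q (fun m : ℤ => C * ∑ n ∈ Finset.range N, v (n + m)) ≤
      C * (∑' k, v k) * (N : ℝ≥0∞) ^ (1 / q.toReal) := by
  set B := ∑' k, v k with hB
  have hT : ∀ m : ℤ, ∑ n ∈ Finset.range N, v (n + m) ≤ B := by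
    intro m
    have : Function.Injective (fun n : ℕ => (n : ℤ) + m) := fun a b h => by simpa using h
    calc _ = ∑ k ∈ (Finset.range N).map ⟨_, this⟩, v k := by simp
      _ ≤ _ := ENNReal.sum_le_tsum _
  have hS : ∑' m : ℤ, ∑ n ∈ Finset.range N, v (n + m) = N * B := by
    rw [Summable.tsum_finsetSum (fun _ _ => ENNReal.summable)]
    have : ∀ n ∈ Finset.range N, ∑' m : ℤ, v (n + m) = B := fun n _ =>
      (Equiv.addLeft (n : ℤ)).tsum_eq v
    rw [Finset.sum_congr rfl this]
    simp
  unfold lpS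
  split_ifs with h
  · subst h
    simp only [ENNReal.toReal_top, div_zero, ENNReal.rpow_zero, mul_one]
    exact iSup_le fun m => by gcongr; exact hT m
  · have hq1 : 1 < q.toReal := by
      have := (ENNReal.toReal_lt_toReal (by simp) h).2 hq
      simpa using this
    set r := q.toReal
    have : ∑' m : ℤ, (C * ∑ n ∈ Finset.range N, v (n + m)) ^ r ≤ (C * B) ^ r * N := by
      calc _ ≤ ∑' m : ℤ, C ^ r * (B ^ (r - 1) * ∑ n ∈ Finset.range N, v (n + m)) := by
            refine ENNReal.tsum_le_tsum fun m => ?_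
            rw [ENNReal.mul_rpow_of_nonneg _ _ (by linarith)]
            gcongr C ^ r * ?_
            set t := ∑ n ∈ Finset.range N, v (n + m) with ht
            have htB : t ≤ B := hT m
            calc t ^ r = t ^ (r - 1) * t ^ (1:ℝ) := by
                  rw [← ENNReal.rpow_add_of_nonneg _ _ (by linarith) (by norm_num)]
                  congr 1; ring
              _ ≤ _ := by
                  rw [ENNReal.rpow_one]
                  have : 0 ≤ r - 1 := by linarith
                  gcongr
        _ = C ^ r * (B ^ (r - 1) * B ^ (1:ℝ)) * N := by
            rw [ENNReal.tsum_mul_left, ENNReal.tsum_mul_left, hS, ENNReal.rpow_one]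
            ring
        _ = _ := by
            rw [← ENNReal.rpow_add_of_nonneg _ _ (by linarith) (by norm_num),
              ENNReal.mul_rpow_of_nonneg _ _ (by linarith)]
            congr 3; ring
    calc _ ≤ ((C * B) ^ r * N) ^ (1 / r) := by gcongr
      _ = _ := by
        have hr : 0 ≤ 1 / r := by positivity
        have hr' : r ≠ 0 := by linarith
        rw [ENNReal.mul_rpow_of_nonneg _ _ hr, ← ENNReal.rpow_mul,
          mul_one_div_cancel hr', ENNReal.rpow_one]

lemma norm_sum_bound : ∃ C : ℝ≥0∞, C ≠ ∞ ∧ ∀ (q p : ℝ≥0∞) (_ : 1 < q) (_ : 2 ≤ p) (N : ℕ) (c : ℝ)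
    (_ : 0 ≤ c), lqlpNorm q p ((c : ℂ) • ∑ n ∈ Finset.range N, Phi n) ≤
      C * (ENNReal.ofReal c * (N : ℝ≥0∞) ^ (1 / q.toReal)) := by
  obtain ⟨C, hC, hs⟩ := scale_bound
  obtain ⟨C1, hC1, hf⟩ := Phi_ft
  have hB := uu_fin
  set B := ∑' k : ℤ, ENNReal.ofReal (uu k) with hBdef
  refine ⟨C * (ENNReal.ofReal C1 * B), by finiteness, ?_⟩
  intro q p hq hp N c hc
  set φ : SchwartzMap R3 ℂ := (c : ℂ) • ∑ n ∈ Finset.range N, Phi n with hφ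
  have hlin : ∀ ζ, ft3 (fun w => φ w) ζ = c * ∑ n ∈ Finset.range N, ft3 (fun w => Phi n w) ζ := by
    intro ζ
    unfold ft3
    rw [← integral_finsetSum, ← integral_const_mul]
    · congr 1 with z
      beta_reduce
      rw [hφ, smul_apply, sum_apply, smul_eq_mul, Finset.mul_sum,
        Finset.mul_sum, Finset.mul_sum]
      refine Finset.sum_congr rfl fun n _ => ?_
      ring
    · intro n _
      have := (Phi n).continuous
      refine (Phi n).integrable.norm.mono' (Continuous.aestronglyMeasurable (by fun_prop)) ?_
      refine Eventually.of_forall fun z => le_of_eq ?_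
      rw [norm_mul, neg_mul, mul_comm Complex.I, ← neg_mul, ← Complex.ofReal_neg,
        Complex.norm_exp_ofReal_mul_I, one_mul]
  have hscale : ∀ m : ℤ, ((2 : ℝ≥0∞) ^ m) ^ ((1 : ℝ) / 2) *
    (lpS p fun k : ℤ × ℤ =>
      eLpNorm (projG ((2 : ℝ) ^ m) ((2 : ℝ) ^ m * (k.1 : ℝ), (2 : ℝ) ^ m * (k.2 : ℝ)) φ) 2 volume)
      ≤ (C * (ENNReal.ofReal c * ENNReal.ofReal C1)) *
        ∑ n ∈ Finset.range N, ENNReal.ofReal (uu (n + m)) := by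
    intro m
    have hl : (0:ℝ) < 2 ^ m := by positivity
    have h2m : (2 : ℝ≥0∞) ^ m = ENNReal.ofReal (2 ^ m) := by
      rw [ENNReal.ofReal, Real.toNNReal_zpow (by norm_num)]
      simp
    set U : ℝ := ∑ n ∈ Finset.range N, uu (n + m) with hU
    have hU0 : 0 ≤ U := Finset.sum_nonneg fun n _ => uu_nonneg _
    refine (hs p hp m φ (ENNReal.ofReal (c * C1 * ((2 ^ m)⁻¹ * U))) ?_).trans (le_of_eq ?_)
    · intro ζ h1 h2
      rw [← ENNReal.ofReal_mul (by positivity), ← ENNReal.ofReal_mul (by positivity),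
        ← ofReal_norm]
      apply ENNReal.ofReal_le_ofReal
      rw [hlin, norm_mul, Complex.norm_real, Real.norm_of_nonneg hc]
      have hterm : ∀ n ∈ Finset.range N, ‖ft3 (fun w => Phi n w) ζ‖ ≤
          C1 * ((2 ^ m)⁻¹ * uu (n + m)) * ((1 + ζ.2.1 ^ 2)⁻¹ * (1 + ζ.2.2 ^ 2)⁻¹) := by
        intro n _
        refine (hf n ζ).trans ?_
        have : (2 ^ m : ℝ)⁻¹ * uu (n + m) = 2 ^ n * (1 + (2 ^ n * 2 ^ m) ^ 2)⁻¹ := by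
          unfold uu
          rw [zpow_add₀ (by norm_num), zpow_natCast]
          field_simp
        rw [this]
        have h3 : ((2:ℝ) ^ n * 2 ^ m) ^ 2 ≤ (2 ^ n * ζ.1) ^ 2 := by
          rw [← sq_abs (2 ^ n * ζ.1), abs_mul, abs_of_pos (by positivity : (0:ℝ) < 2 ^ n)]
          gcongr
        gcongr
      calc _ ≤ c * ∑ n ∈ Finset.range N, C1 * ((2 ^ m)⁻¹ * uu (n + m)) * ((1 + ζ.2.1 ^ 2)⁻¹ * (1 + ζ.2.2 ^ 2)⁻¹) := by
            gcongr
            exact (norm_sum_le _ _).trans (Finset.sum_le_sum hterm)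
        _ = _ := by
            rw [← Finset.sum_mul, ← Finset.mul_sum, ← Finset.mul_sum]
            ring
    · rw [h2m, ← ENNReal.ofReal_sum_of_nonneg (fun n _ => uu_nonneg _), ← ENNReal.ofReal_mul hl.le,
        ← ENNReal.ofReal_mul hc, mul_assoc C, ← ENNReal.ofReal_mul (by positivity)]
      congr 2
      rw [← hU]
      field_simp
  have hmono : ∀ f g : ℤ → ℝ≥0∞, (∀ m, f m ≤ g m) → lpS q f ≤ lpS q g := by
    intro f g hfg
    unfold lpS
    split_ifs with h
    · exact iSup_mono hfg
    · gcongr with m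
      exact hfg m
  refine (hmono _ _ hscale).trans ((lpS_T q hq (fun k => ENNReal.ofReal (uu k)) N _).trans (le_of_eq ?_))
  rw [← hBdef]
  ring

theorem lqlp_not_embedded (q p : ℝ≥0∞) (hq : 1 < q) (hp : 2 ≤ p) :
    ∃ (φ : ℕ → SchwartzMap R3 ℂ) (ψ : SchwartzMap R3 ℂ),
      Tendsto (fun j => lqlpNorm q p (φ j)) atTop (nhds 0) ∧
      Tendsto (fun j => (∫ z : R3, (φ j) z * ψ z).re) atTop atTop := by
  set s : ℝ := 1 / q.toReal with hs
  have hs0 : 0 ≤ s := by positivity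
  have hs1 : s < 1 := by
    by_cases h : q = ∞
    · simp [hs, h]
    · have := (ENNReal.toReal_lt_toReal (by simp) h).2 hq
      rw [ENNReal.toReal_one] at this
      rw [hs, div_lt_one (by linarith)]
      exact this
  obtain ⟨C, hC, hb⟩ := norm_sum_bound
  let c : ℕ → ℝ := fun j => ((j + 1 : ℕ) : ℝ) ^ (-((1 + s) / 2))
  have hc : ∀ j, 0 ≤ c j := fun j => by positivity
  have hcast : Tendsto (fun j : ℕ => ((j + 1 : ℕ) : ℝ)) atTop atTop :=
    tendsto_natCast_atTop_atTop.comp (tendsto_add_atTop_nat 1)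
  refine ⟨fun j => (c j : ℂ) • ∑ n ∈ Finset.range (j + 1), Phi n, Phi 0, ?_, ?_⟩
  · have hlim : Tendsto (fun j : ℕ => C * ENNReal.ofReal (((j + 1 : ℕ) : ℝ) ^ (-((1 - s) / 2))))
        atTop (nhds 0) := by
      have h1 := (tendsto_rpow_neg_atTop (y := (1 - s) / 2) (by linarith)).comp hcast
      have h2 := ENNReal.Tendsto.const_mul (ENNReal.tendsto_ofReal h1) (Or.inr hC)
      simpa using h2
    refine tendsto_of_tendsto_of_tendsto_of_le_of_le tendsto_const_nhds hlim (fun _ => zero_le) ?_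
    intro j
    refine (hb q p hq hp (j + 1) (c j) (hc j)).trans (le_of_eq ?_)
    have hpos : (0:ℝ) < ((j + 1 : ℕ) : ℝ) := by positivity
    have : (((j + 1 : ℕ) : ℝ≥0∞)) ^ s = ENNReal.ofReal (((j + 1 : ℕ) : ℝ) ^ s) := by
      rw [← ENNReal.ofReal_rpow_of_pos hpos, ENNReal.ofReal_natCast]
    rw [← hs, this, ← ENNReal.ofReal_mul (hc j)]
    congr 2
    simp only [c]
    rw [← Real.rpow_add hpos]
    congr 1; ring
  · have hlim : Tendsto (fun j : ℕ => ((j + 1 : ℕ) : ℝ) ^ ((1 - s) / 2)) atTop atTop :=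
      (tendsto_rpow_atTop (by linarith)).comp hcast
    refine tendsto_atTop_mono (fun j => ?_) hlim
    have hpos : (0:ℝ) < ((j + 1 : ℕ) : ℝ) := by positivity
    have e : ∫ z : R3, ((c j : ℂ) • ∑ n ∈ Finset.range (j + 1), Phi n) z * Phi 0 z
        = c j * ∑ n ∈ Finset.range (j + 1), ∫ z : R3, Phi n z * Phi 0 z := by
      rw [← integral_finsetSum _ (fun n _ => (Phi_pair n).1), ← integral_const_mul]
      congr 1 with z
      rw [smul_apply, sum_apply, smul_eq_mul, mul_assoc, Finset.sum_mul]
    rw [e, Complex.re_ofReal_mul, Complex.re_sum]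
    calc ((j + 1 : ℕ) : ℝ) ^ ((1 - s) / 2) = c j * ((j + 1 : ℕ) : ℝ) := by
          simp only [c]
          conv_rhs => rw [← Real.rpow_one ((j + 1 : ℕ) : ℝ), ← Real.rpow_mul hpos.le, ← Real.rpow_add hpos]
          congr 1; ring
      _ ≤ _ := by
          refine mul_le_mul_of_nonneg_left ?_ (hc j)
          calc ((j + 1 : ℕ) : ℝ) = ∑ n ∈ Finset.range (j + 1), (1:ℝ) := by simp
            _ ≤ _ := Finset.sum_le_sum fun n _ => (Phi_pair n).2
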